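/- arXiv:2604.11366 — 2 statements merged into one kernel-verified Lean document; each statement's English description precedes it below -/
import Mathlib

section
/- For every even integer t ≥ 2 and every ε > 0 there exists N such that for all n ≥ N there exists a bipartite graph G on n vertices containing no subgraph isomorphic to B_t with e(G) ≥ ((1/4)·t(t+2)/(t+1)^{3/2} − ε)·n^{3/2}. (That is, ex_bip(n, B_t) ≥ (1/4)·t(t+2)/(t+1)^{3/2}·(1+o(1))·n^{3/2} for even t.) -/
open SimpleGraph

/-- `F` is contained in `G` as a subgraph: there is an injective map preserving adjacency. -/
def ContainsCopy {α β : Type*} (F : SimpleGraph α) (G : SimpleGraph β) : Prop :=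
  ∃ f : α → β, Function.Injective f ∧ ∀ ⦃a b : α⦄, F.Adj a b → G.Adj (f a) (f b)

/-- `Bgraph t = K₂ □ S_t`, the Cartesian product of an edge and a star with `t` edges. -/
def Bgraph (t : ℕ) : SimpleGraph (Fin 2 × (Fin 1 ⊕ Fin t)) :=
  (⊤ : SimpleGraph (Fin 2)).boxProd (completeBipartiteGraph (Fin 1) (Fin t))

/-!
Replace every point of an affine plane of prime-power order `q` by `k` copies and every line by `l`
copies, where `k + l = t + 1`, and let copies be adjacent when the originals are incident. The
incidence graph of the plane has no `4`-cycle, so each of the `t` `4`-cycles of a `B_t` folds when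
the copies are identified again: it has a vertex off the common edge lying over an end of that edge.
Together with the two ends this gives `t + 2` vertices over a single edge, where there are only
`t + 1`.

The graph has `(t + 1) q²` vertices and `k l q³` edges, where `k l ≥ t (t + 2) / 4` for balanced `k`
and `l`, so `q` must be a prime power just below `√(n / (t + 1))`. Its existence for large `n` is a
Wiener–Ikehara argument. Fix a test function `w` with `w(0) > 0` whose Fourier transform is
nonpositive off `(-δ, δ)`, and pair `w` with the Dirichlet series of `Λ` on the lines `Re s = σ`,
twisted by the frequency `-y`. Were no prime power in `(e^(y-δ), e^(y+δ))`, every term would be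
nonpositive. But as `σ ↓ 1` the pole at `s = 1` and the Riemann–Lebesgue lemma give a limit tending
to `w(0)` as `y → ∞`.
-/

section TestFunction

open MeasureTheory FourierTransform Complex ComplexConjugate ContDiff
open scoped ComplexOrder

theorem fourier_const_smul_add {f g : ℝ → ℂ} (hf : Integrable f) (hg : Integrable g) (c : ℂ)
    (v : ℝ) : 𝓕 (c • f + g) v = c * 𝓕 f v + 𝓕 g v := by
  have hadd : 𝓕 (c • f + g) = 𝓕 (c • f) + 𝓕 g :=
    VectorFourier.fourierIntegral_add Real.continuous_fourierChar (by fun_prop) (hf.smul c) hg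
  have hsmul : 𝓕 (c • f) = c • 𝓕 f := VectorFourier.fourierIntegral_const_smul _ _ _ _ _
  rw [hadd, hsmul, Pi.add_apply, Pi.smul_apply, smul_eq_mul]

theorem fourier_comp_div (f : ℝ → ℂ) {T : ℝ} (hT : T ≠ 0) (v : ℝ) :
    𝓕 (fun τ => f (τ / T)) v = |T| * 𝓕 f (T * v) := by
  have h := Measure.integral_comp_div (fun τ => 𝐞 (-(τ * (T * v))) • f τ) T
  simp only [← mul_assoc, div_mul_cancel₀ _ hT] at h
  simpa only [Real.fourier_real_eq, ← mul_assoc, real_smul] using h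

theorem conj_fourier_eq_self {f : ℝ → ℂ} (hf : ∀ τ, conj (f (-τ)) = f τ) (v : ℝ) :
    conj (𝓕 f v) = 𝓕 f v := by
  rw [Real.fourier_real_eq, ← integral_conj, ← integral_neg_eq_self]
  refine integral_congr_ae (.of_forall fun τ => ?_)
  simp only [Circle.smul_def, smul_eq_mul, map_mul, hf, ← Circle.coe_inv_eq_conj,
    ← AddChar.map_neg_eq_inv]
  ring_nf

-- An even real bump has a real Fourier transform, and self-convolution squares it.
theorem exists_contDiff_hasCompactSupport_fourier_nonneg :
    ∃ ψ : ℝ → ℂ, ContDiff ℝ ∞ ψ ∧ HasCompactSupport ψ ∧ 0 < ψ 0 ∧ ∀ v, 0 ≤ 𝓕 ψ v := by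
  let b : ContDiffBump (0 : ℝ) := default
  let φ : ℝ → ℂ := fun τ => b τ
  have hφ : ContDiff ℝ ∞ φ := ofRealCLM.contDiff.comp b.contDiff
  have hφ_supp : HasCompactSupport φ := b.hasCompactSupport.comp_left ofReal_zero
  have hφ_int : Integrable φ := hφ.continuous.integrable_of_hasCompactSupport hφ_supp
  refine ⟨convolution φ φ (ContinuousLinearMap.mul ℝ ℂ) volume, ?_, ?_, ?_, fun v => ?_⟩
  · exact hφ_supp.contDiff_convolution_right _ hφ_int.locallyIntegrable hφ
  · exact hφ_supp.convolution _ hφ_supp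
  · have hpos : 0 < ∫ τ, b τ * b τ :=
      (b.continuous.mul b.continuous).integral_pos_of_hasCompactSupport_nonneg_nonzero
        b.hasCompactSupport.mul_right (fun τ => mul_self_nonneg _)
        (x := 0) (mul_self_ne_zero.mpr (b.pos_of_mem_ball (Metric.mem_ball_self b.rOut_pos)).ne')
    have heq : convolution φ φ (ContinuousLinearMap.mul ℝ ℂ) volume 0 = ↑(∫ τ, b τ * b τ) := by
      simp [convolution, φ, b.neg, ← integral_complex_ofReal]
    rw [heq]
    exact Complex.zero_lt_real.mpr hpos
  · have hreal : conj (𝓕 φ v) = 𝓕 φ v := conj_fourier_eq_self (fun τ => by simp [φ, b.neg]) v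
    have hsq : 𝓕 (convolution φ φ (ContinuousLinearMap.mul ℝ ℂ) volume) v =
        conj (𝓕 φ v) * 𝓕 φ v := by
      rw [hreal]
      exact Real.fourier_mul_convolution_eq hφ_int hφ_int v
    rw [hsq]
    exact star_mul_self_nonneg _

theorem integrable_fourier_of_contDiff {w : ℝ → ℂ} (hw : ContDiff ℝ ∞ w)
    (hw' : HasCompactSupport w) :
    Integrable (𝓕 w) :=
  (𝓕 (hw'.toSchwartzMap hw)).integrable

theorem fourier_deriv_deriv {ψ : ℝ → ℂ} (hψ : ContDiff ℝ ∞ ψ) (hψ' : HasCompactSupport ψ) (v : ℝ) :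
    𝓕 (deriv (deriv ψ)) v = -(2 * Real.pi * v) ^ 2 * 𝓕 ψ v := by
  obtain ⟨hdiff, hd⟩ := contDiff_infty_iff_deriv.mp hψ
  obtain ⟨hdiff', hd'⟩ := contDiff_infty_iff_deriv.mp hd
  have hd_int := hd.continuous.integrable_of_hasCompactSupport (μ := volume) hψ'.deriv
  rw [Real.fourier_deriv hd_int hdiff'
      (hd'.continuous.integrable_of_hasCompactSupport hψ'.deriv.deriv),
    Real.fourier_deriv (hψ.continuous.integrable_of_hasCompactSupport hψ') hdiff hd_int]
  simp only [smul_eq_mul]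
  linear_combination (2 * Real.pi * v : ℂ) ^ 2 * 𝓕 ψ v * I_sq

-- Adding a small multiple of its second derivative to `ψ` multiplies `𝓕 ψ ≥ 0` by `1 - (a v)²`.
theorem exists_fourier_nonpos_off_bounded :
    ∃ w : ℝ → ℂ, Continuous w ∧ HasCompactSupport w ∧ Integrable (𝓕 w) ∧ 0 < (w 0).re ∧
      ∃ V > 0, ∀ v, V ≤ |v| → 𝓕 w v ≤ 0 := by
  obtain ⟨ψ, hψ, hψ', hψ0, hnonneg⟩ := exists_contDiff_hasCompactSupport_fourier_nonneg
  have hψ₂ : ContDiff ℝ ∞ (deriv (deriv ψ)) :=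
    (contDiff_infty_iff_deriv.mp (contDiff_infty_iff_deriv.mp hψ).2).2
  let w (a : ℝ) : ℝ → ℂ := ((a / (2 * Real.pi) : ℂ) ^ 2) • deriv (deriv ψ) + ψ
  have hw (a : ℝ) : ContDiff ℝ ∞ (w a) := (hψ₂.const_smul ((a / (2 * Real.pi) : ℂ) ^ 2)).add hψ
  have hw' (a : ℝ) : HasCompactSupport (w a) := hψ'.deriv.deriv.smul_left.add hψ'
  have hFw (a v : ℝ) : 𝓕 (w a) v = (1 - (a * v) ^ 2 : ℝ) * 𝓕 ψ v := by
    rw [fourier_const_smul_add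
        (hψ₂.continuous.integrable_of_hasCompactSupport hψ'.deriv.deriv)
        (hψ.continuous.integrable_of_hasCompactSupport hψ'), fourier_deriv_deriv hψ hψ']
    push_cast
    field_simp
    ring
  obtain ⟨a, hwa, ha⟩ : ∃ a : ℝ, 0 < (w a 0).re ∧ 0 < a := by
    have hcont : Continuous fun a : ℝ => (w a 0).re := by
      simp only [w, Pi.add_apply, Pi.smul_apply]
      fun_prop
    have hpos : 0 < (w 0 0).re := by simpa [w] using (Complex.pos_iff.mp hψ0).1
    exact (((hcont.tendsto 0).mono_left nhdsWithin_le_nhds).eventually (lt_mem_nhds hpos)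
      |>.and (self_mem_nhdsWithin (s := Set.Ioi 0))).exists
  refine ⟨w a, (hw a).continuous, hw' a, integrable_fourier_of_contDiff (hw a) (hw' a), hwa,
    a⁻¹, inv_pos.mpr ha, fun v hv => ?_⟩
  have hav : 1 ≤ (a * v) ^ 2 := by
    rw [one_le_sq_iff_one_le_abs, abs_mul, abs_of_pos ha]
    exact (inv_le_iff_one_le_mul₀' ha).mp hv
  rw [hFw]
  exact mul_nonpos_of_nonpos_of_nonneg (by exact_mod_cast sub_nonpos.mpr hav) (hnonneg v)

theorem exists_fourier_nonpos_of_le_abs {δ : ℝ} (hδ : 0 < δ) :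
    ∃ w : ℝ → ℂ, Continuous w ∧ HasCompactSupport w ∧ Integrable (𝓕 w) ∧ 0 < (w 0).re ∧
      ∀ v, δ ≤ |v| → 𝓕 w v ≤ 0 := by
  obtain ⟨w, hw, hw', hFw, hw0, V, hV, hneg⟩ := exists_fourier_nonpos_off_bounded
  have hT : 0 < V / δ := by positivity
  refine ⟨fun τ => w (τ / (V / δ)), by fun_prop, ?_, ?_, by simpa using hw0, fun v hv => ?_⟩
  · exact hw'.comp_homeomorph (Homeomorph.mulRight₀ _ (inv_ne_zero hT.ne'))
  · rw [funext (fourier_comp_div w hT.ne')]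
    exact (hFw.comp_mul_left' hT.ne').const_mul _
  · rw [fourier_comp_div _ hT.ne']
    refine mul_nonpos_of_nonneg_of_nonpos (by simp) (hneg _ ?_)
    rw [abs_mul, abs_of_pos hT]
    calc V = V / δ * δ := (div_mul_cancel₀ V hδ.ne').symm
      _ ≤ V / δ * |v| := by gcongr

end TestFunction

section Tauberian

open MeasureTheory Filter Topology FourierTransform Complex
open scoped ComplexOrder

/-- The point of abscissa `σ` and ordinate `2πτ`, so that `n ^ (-2πiτ)` is the additive character
`𝐞 (-τ log n)` occurring in Mathlib's Fourier transform. -/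
noncomputable def verticalLine (σ τ : ℝ) : ℂ := σ + (2 * Real.pi * τ : ℝ) * I

@[simp] theorem re_verticalLine (σ τ : ℝ) : (verticalLine σ τ).re = σ := by
  simp [verticalLine]

theorem continuous_verticalLine : Continuous fun z : ℝ × ℝ => verticalLine z.1 z.2 := by
  unfold verticalLine
  fun_prop

theorem term_verticalLine (f : ℕ → ℂ) (σ τ : ℝ) (n : ℕ) :
    LSeries.term f (verticalLine σ τ) n = LSeries.term f σ n * 𝐞 (-(τ * Real.log n)) := by
  rcases eq_or_ne n 0 with rfl | hn
  · simp
  rw [LSeries.term_of_ne_zero hn, LSeries.term_of_ne_zero hn, verticalLine,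
    cpow_add _ _ (Nat.cast_ne_zero.mpr hn), div_mul_eq_div_div, div_eq_mul_inv (f n / _),
    ← cpow_neg, cpow_def_of_ne_zero (Nat.cast_ne_zero.mpr hn) (-_), ← natCast_log,
    Real.fourierChar_apply]
  congr 2
  push_cast
  ring

theorem hasSum_term_mul_fourier {f : ℕ → ℂ} {w : ℝ → ℂ} (hw : Integrable w) {σ : ℝ}
    (hf : LSeriesSummable f σ) (v : ℝ) :
    HasSum (fun n : ℕ => LSeries.term f σ n * 𝓕 w (Real.log n + v))
      (𝓕 (fun τ => w τ * LSeries f (verticalLine σ τ)) v) := by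
  have hint (v : ℝ) : Integrable fun τ => 𝐞 (-(τ * v)) • w τ := by
    simpa [mul_comm] using (Real.fourierIntegral_convergent_iff v).mpr hw
  have hchar (n : ℕ) (τ : ℝ) : 𝐞 (-(τ * v)) • (w τ * LSeries.term f (verticalLine σ τ) n) =
      LSeries.term f σ n * (𝐞 (-(τ * (Real.log n + v))) • w τ) := by
    rw [term_verticalLine, mul_add, neg_add, AddChar.map_add_eq_mul]
    simp only [Circle.smul_def, Circle.coe_mul, smul_eq_mul]
    ring
  have hsum := hasSum_integral_of_summable_integral_norm
    (F := fun (n : ℕ) τ => 𝐞 (-(τ * v)) • (w τ * LSeries.term f (verticalLine σ τ) n)) (μ := volume)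
    (fun n => by simpa only [hchar] using (hint _).const_mul _)
    (by simpa only [hchar, norm_mul, Circle.norm_smul, integral_const_mul] using
      hf.norm.mul_right _)
  rw [Real.fourier_real_eq]
  simp only [LSeries, ← tsum_mul_left, ← tsum_const_smul']
  refine hsum.congr_fun fun n => ?_
  simp only [hchar, integral_const_mul, Real.fourier_real_eq]

theorem fourier_div_verticalLine {w : ℝ → ℂ} (hw : Integrable w) {σ : ℝ} (hσ : 1 < σ) (v : ℝ) :
    𝓕 (fun τ => w τ / (verticalLine σ τ - 1)) v =
      ∫ u in Set.Ioi (0 : ℝ), Real.exp (-(σ - 1) * u) * 𝓕 w (u + v) := by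
  have hlaplace (τ : ℝ) : 1 / (verticalLine σ τ - 1) =
      ∫ u in Set.Ioi (0 : ℝ), Real.exp (-(σ - 1) * u) * (𝐞 (-(τ * u)) : ℂ) := by
    have h := integral_exp_mul_complex_Ioi (a := -(verticalLine σ τ - 1)) (by simpa using hσ) 0
    rw [ofReal_zero, mul_zero, Complex.exp_zero, neg_div_neg_eq] at h
    rw [← h]
    refine integral_congr_ae (.of_forall fun u => ?_)
    simp only [Real.fourierChar_apply, verticalLine, ofReal_exp, ← Complex.exp_add]
    push_cast
    ring_nf
  have hint : Integrable (Function.uncurry fun τ u : ℝ =>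
      (Real.exp (-(σ - 1) * u) : ℂ) * (𝐞 (-(τ * (u + v))) • w τ))
      (volume.prod (volume.restrict (Set.Ioi 0))) := by
    have hexp : Integrable (fun u : ℝ => (Real.exp (-(σ - 1) * u) : ℂ))
        (volume.restrict (Set.Ioi 0)) :=
      (integrableOn_exp_mul_Ioi (by linarith) 0).ofReal
    have hbdd := (hw.mul_prod hexp).bdd_mul (f := fun z => (𝐞 (-(z.1 * (z.2 + v))) : ℂ)) (c := 1)
      (Continuous.aestronglyMeasurable (by fun_prop)) (.of_forall fun z => (Circle.norm_coe _).le)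
    refine hbdd.congr (.of_forall fun z => ?_)
    simp only [Function.uncurry_def, Circle.smul_def, smul_eq_mul]
    ring
  rw [Real.fourier_real_eq]
  calc ∫ τ, 𝐞 (-(τ * v)) • (w τ / (verticalLine σ τ - 1))
      = ∫ τ, ∫ u in Set.Ioi (0 : ℝ),
          (Real.exp (-(σ - 1) * u) : ℂ) * (𝐞 (-(τ * (u + v))) • w τ) := by
        refine integral_congr_ae (.of_forall fun τ => ?_)
        simp only [div_eq_mul_one_div (w τ), hlaplace, Circle.smul_def, smul_eq_mul,
          ← integral_const_mul]
        congr with u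
        rw [mul_add, neg_add, AddChar.map_add_eq_mul, Circle.coe_mul]
        ring
    _ = ∫ u in Set.Ioi (0 : ℝ), Real.exp (-(σ - 1) * u) * 𝓕 w (u + v) := by
        rw [integral_integral_swap hint]
        simp only [integral_const_mul, Real.fourier_real_eq]

theorem tendsto_integral_exp_mul_nhdsGT {h : ℝ → ℂ} (hh : IntegrableOn h (Set.Ioi 0)) :
    Tendsto (fun σ : ℝ => ∫ u in Set.Ioi (0 : ℝ), Real.exp (-(σ - 1) * u) * h u) (𝓝[>] 1)
      (𝓝 (∫ u in Set.Ioi (0 : ℝ), h u)) := by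
  refine tendsto_integral_filter_of_dominated_convergence (fun u => ‖h u‖)
    (.of_forall fun σ => ?_) ?_ hh.norm (.of_forall fun u => ?_)
  · exact (Continuous.aestronglyMeasurable (by fun_prop)).mul hh.aestronglyMeasurable
  · filter_upwards [self_mem_nhdsWithin] with σ hσ
    filter_upwards [ae_restrict_mem measurableSet_Ioi] with u hu
    rw [norm_mul, Complex.norm_of_nonneg (Real.exp_nonneg _)]
    refine mul_le_of_le_one_left (norm_nonneg _) (Real.exp_le_one_iff.mpr ?_)
    exact mul_nonpos_of_nonpos_of_nonneg (by simpa using le_of_lt hσ) (le_of_lt hu)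
  · have hcont : Continuous fun σ : ℝ => (Real.exp (-(σ - 1) * u) : ℂ) * h u := by fun_prop
    simpa using (hcont.tendsto 1).mono_left nhdsWithin_le_nhds

theorem tendsto_setIntegral_Ioi_comp_add_atBot {h : ℝ → ℂ} (hh : Integrable h) :
    Tendsto (fun v : ℝ => ∫ u in Set.Ioi (0 : ℝ), h (u + v)) atBot (𝓝 (∫ u, h u)) := by
  have hshift (v : ℝ) : ∫ u in Set.Ioi (0 : ℝ), h (u + v) = ∫ u in Set.Ioi v, h u := by
    simpa using (measurePreserving_add_right volume v).setIntegral_preimage_emb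
      (measurableEmbedding_addRight v) h (Set.Ioi v)
  simpa only [hshift] using (aecover_Ioi (a := fun v : ℝ => v) tendsto_id)
    |>.integral_tendsto_of_countably_generated hh

theorem tendsto_fourier_verticalLine_nhdsGT {w : ℝ → ℂ} (hw : Continuous w)
    (hw' : HasCompactSupport w) {g : ℂ → ℂ} (hg : ContinuousOn g {s | 1 ≤ s.re}) (v : ℝ) :
    Tendsto (fun σ => 𝓕 (fun τ => w τ * g (verticalLine σ τ)) v) (𝓝[>] 1)
      (𝓝 (𝓕 (fun τ => w τ * g (verticalLine 1 τ)) v)) := by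
  have hcont : ContinuousOn (fun σ => 𝓕 (fun τ => w τ * g (verticalLine σ τ)) v) (Set.Ici 1) := by
    simp only [Real.fourier_real_eq]
    refine continuousOn_integral_of_compact_support hw' ?_ fun σ τ _ hτ => ?_
    · have hline : ContinuousOn (fun z : ℝ × ℝ => g (verticalLine z.1 z.2)) (Set.Ici 1 ×ˢ .univ) :=
        hg.comp continuous_verticalLine.continuousOn fun z hz => by simpa using hz.1
      have hchar : Continuous fun z : ℝ × ℝ => 𝐞 (-(z.2 * v)) := by fun_prop
      exact hchar.continuousOn.smul ((hw.comp continuous_snd).continuousOn.mul hline)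
    · simp [image_eq_zero_of_notMem_tsupport hτ]
  exact (hcont 1 Set.self_mem_Ici).mono_left (nhdsWithin_mono _ Set.Ioi_subset_Ici_self)

theorem fourier_mul_verticalLine_eq_add {w : ℝ → ℂ} (hw : Continuous w)
    (hw' : HasCompactSupport w) {F g : ℂ → ℂ} {A : ℂ} (hg : ContinuousOn g {s | 1 ≤ s.re})
    (hF : ∀ s : ℂ, 1 < s.re → F s = A / (s - 1) + g s) {σ : ℝ} (hσ : 1 < σ) (v : ℝ) :
    𝓕 (fun τ => w τ * F (verticalLine σ τ)) v =
      A * (∫ u in Set.Ioi (0 : ℝ), Real.exp (-(σ - 1) * u) * 𝓕 w (u + v)) +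
        𝓕 (fun τ => w τ * g (verticalLine σ τ)) v := by
  have hline : Continuous (verticalLine σ) :=
    continuous_verticalLine.comp (by fun_prop : Continuous fun τ : ℝ => (σ, τ))
  have hne (τ : ℝ) : verticalLine σ τ - 1 ≠ 0 := fun h => by
    have := congrArg re h
    simp only [sub_re, re_verticalLine, one_re, zero_re] at this
    linarith
  have hpole : Integrable fun τ => w τ / (verticalLine σ τ - 1) :=
    (hw.div (hline.sub continuous_const) hne).integrable_of_hasCompactSupport
      (by simpa only [div_eq_mul_inv] using hw'.mul_right)
  have hreg : Integrable fun τ => w τ * g (verticalLine σ τ) :=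
    (hw.mul (hg.comp_continuous hline (by simpa using hσ.le))).integrable_of_hasCompactSupport
      hw'.mul_right
  rw [← fourier_div_verticalLine (hw.integrable_of_hasCompactSupport hw') hσ]
  have hsplit : (fun τ => w τ * F (verticalLine σ τ)) =
      A • (fun τ => w τ / (verticalLine σ τ - 1)) + fun τ => w τ * g (verticalLine σ τ) := by
    ext τ
    rw [hF _ (by simpa using hσ), Pi.add_apply, Pi.smul_apply, smul_eq_mul]
    ring
  rw [hsplit, fourier_const_smul_add hpole hreg]

theorem tendsto_tsum_term_mul_fourier {f : ℕ → ℂ}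
    (hsum : ∀ σ : ℝ, 1 < σ → LSeriesSummable f σ) {g : ℂ → ℂ}
    (hg : ContinuousOn g {s | 1 ≤ s.re}) {A : ℂ}
    (hfg : ∀ s : ℂ, 1 < s.re → LSeries f s = A / (s - 1) + g s) {w : ℝ → ℂ} (hw : Continuous w)
    (hw' : HasCompactSupport w) (hFw : Integrable (𝓕 w)) (v : ℝ) :
    Tendsto (fun σ : ℝ => ∑' n : ℕ, LSeries.term f σ n * 𝓕 w (Real.log n + v)) (𝓝[>] 1)
      (𝓝 (A * (∫ u in Set.Ioi (0 : ℝ), 𝓕 w (u + v)) +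
        𝓕 (fun τ => w τ * g (verticalLine 1 τ)) v)) := by
  have hpole := tendsto_integral_exp_mul_nhdsGT (hFw.comp_add_right v).integrableOn
  refine ((hpole.const_mul A).add (tendsto_fourier_verticalLine_nhdsGT hw hw' hg v)).congr' ?_
  filter_upwards [self_mem_nhdsWithin] with σ hσ
  rw [(hasSum_term_mul_fourier (hw.integrable_of_hasCompactSupport hw') (hsum σ hσ) v).tsum_eq,
    fourier_mul_verticalLine_eq_add hw hw' hg hfg hσ]

theorem tendsto_integral_fourier_add_fourier_atBot {w : ℝ → ℂ} (hw : Continuous w)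
    (hw_int : Integrable w) (hFw : Integrable (𝓕 w)) (A : ℂ) (h : ℝ → ℂ) :
    Tendsto (fun v => A * (∫ u in Set.Ioi (0 : ℝ), 𝓕 w (u + v)) + 𝓕 h v) atBot (𝓝 (A * w 0)) := by
  have hinv : ∫ u, 𝓕 w u = w 0 := by
    simpa [Real.fourierInv_eq] using congrFun (hw.fourierInv_fourier_eq hw_int hFw) 0
  simpa only [hinv, add_zero] using ((tendsto_setIntegral_Ioi_comp_add_atBot hFw).const_mul A).add
    ((Real.zero_at_infty_fourier h).mono_left atBot_le_cocompact)

theorem eventually_exists_ne_zero_abs_log_sub_lt {f : ℕ → ℂ} (hf : ∀ n, 0 ≤ f n)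
    (hsum : ∀ σ : ℝ, 1 < σ → LSeriesSummable f σ) {g : ℂ → ℂ}
    (hg : ContinuousOn g {s | 1 ≤ s.re}) {A : ℂ} (hA : 0 < A)
    (hfg : ∀ s : ℂ, 1 < s.re → LSeries f s = A / (s - 1) + g s) {δ : ℝ} (hδ : 0 < δ) :
    ∀ᶠ y : ℝ in atTop, ∃ n : ℕ, f n ≠ 0 ∧ |Real.log n - y| < δ := by
  obtain ⟨w, hw, hw', hFw, hw0, hneg⟩ := exists_fourier_nonpos_of_le_abs hδ
  have hw_int : Integrable w := hw.integrable_of_hasCompactSupport hw'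
  have hlim := (continuous_re.tendsto _).comp (tendsto_integral_fourier_add_fourier_atBot hw hw_int
    hFw A fun τ => w τ * g (verticalLine 1 τ))
  have hpos : 0 < (A * w 0).re := by
    rw [mul_re, ← (Complex.pos_iff.mp hA).2, zero_mul, sub_zero]
    exact mul_pos (Complex.pos_iff.mp hA).1 hw0
  filter_upwards [tendsto_neg_atTop_atBot.eventually (hlim.eventually (lt_mem_nhds hpos))] with y hy
  by_contra! hgap
  refine hy.not_ge (le_of_tendsto ((continuous_re.tendsto _).comp
    (tendsto_tsum_term_mul_fourier hsum hg hfg hw hw' hFw (-y))) ?_)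
  filter_upwards [self_mem_nhdsWithin] with σ hσ
  have hseries := hasSum_term_mul_fourier hw_int (hsum σ hσ) (-y)
  rw [Function.comp_apply, ← (hasSum_re hseries.summable.hasSum).tsum_eq]
  refine tsum_nonpos fun n => ?_
  rcases eq_or_ne (f n) 0 with hn | hn
  · simp [LSeries.term_def, hn]
  · have hterm := Complex.nonneg_iff.mp (LSeries.term_nonneg (hf n) σ)
    rw [mul_re, ← hterm.2, zero_mul, sub_zero]
    exact mul_nonpos_of_nonneg_of_nonpos hterm.1 (Complex.nonpos_iff.mp (hneg _ (hgap n hn))).1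

open ArithmeticFunction in
theorem eventually_exists_isPrimePow_abs_log_sub_lt {δ : ℝ} (hδ : 0 < δ) :
    ∀ᶠ y : ℝ in atTop, ∃ q : ℕ, IsPrimePow q ∧ |Real.log q - y| < δ := by
  have hresidue (n : ℕ) : vonMangoldt.residueClass (1 : ZMod 1) n = vonMangoldt n := by
    simp [vonMangoldt.residueClass, Set.indicator, Subsingleton.elim (n : ZMod 1) 1]
  have hfg (s : ℂ) (hs : 1 < s.re) : LSeries (fun n => (vonMangoldt n : ℂ)) s =
      1 / (s - 1) + vonMangoldt.LFunctionResidueClassAux (1 : ZMod 1) s := by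
    rw [vonMangoldt.eqOn_LFunctionResidueClassAux isUnit_one hs]
    simp [hresidue]
  filter_upwards [eventually_exists_ne_zero_abs_log_sub_lt
    (fun n => by exact_mod_cast vonMangoldt_nonneg)
    (fun σ hσ => LSeriesSummable_vonMangoldt hσ)
    (vonMangoldt.continuousOn_LFunctionResidueClassAux 1) one_pos hfg hδ] with y ⟨q, hq, hqy⟩
  exact ⟨q, vonMangoldt_ne_zero_iff.mp (by exact_mod_cast hq), hqy⟩

theorem eventually_exists_isPrimePow_mem_Icc {η : ℝ} (hη₀ : 0 < η) (hη₁ : η < 1) :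
    ∀ᶠ x : ℝ in atTop, ∃ q : ℕ, IsPrimePow q ∧ (q : ℝ) ∈ Set.Icc (η * x) x := by
  have hδ : 0 < -Real.log η / 2 := by linarith [Real.log_neg hη₀ hη₁]
  have hlog := tendsto_atTop_add_const_right atTop (Real.log η / 2) Real.tendsto_log_atTop
  filter_upwards [hlog.eventually (eventually_exists_isPrimePow_abs_log_sub_lt hδ),
    eventually_gt_atTop 0] with x ⟨q, hq, hqx⟩ hx
  have hq₀ : (0 : ℝ) < q := by exact_mod_cast hq.pos
  obtain ⟨hlower, hupper⟩ := abs_lt.mp hqx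
  refine ⟨q, hq, ?_, ?_⟩
  · rw [← Real.log_le_log_iff (by positivity) hq₀, Real.log_mul hη₀.ne' hx.ne']
    linarith
  · rw [← Real.log_le_log_iff hq₀ hx]
    linarith

end Tauberian

section C4Free

variable {V W : Type*}

/-- `G` has no `4`-cycle, encoded as: distinct vertices have at most one common neighbour. -/
def IsC4Free (G : SimpleGraph V) : Prop :=
  Pairwise fun u v => (G.commonNeighbors u v).Subsingleton

theorem IsC4Free.eq_or_eq_of_adj {G : SimpleGraph V} (hG : IsC4Free G) {a b c d : V}
    (hab : G.Adj a b) (hbc : G.Adj b c) (hcd : G.Adj c d) (hda : G.Adj d a) : a = c ∨ b = d :=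
  or_iff_not_imp_left.mpr fun hac => hG hac ⟨hab, hbc.symm⟩ ⟨hda.symm, hcd⟩

theorem IsC4Free.not_containsCopy_Bgraph_comap {H : SimpleGraph W} (hH : IsC4Free H) {π : V → W}
    {t : ℕ} (hπ : ∀ ⦃x y⦄, H.Adj x y → (π ⁻¹' {x, y}).encard ≤ t + 1) :
    ¬ ContainsCopy (Bgraph t) (H.comap π) := by
  rintro ⟨f, hf, hadj⟩
  have spine : H.Adj (π (f (0, .inl 0))) (π (f (1, .inl 0))) :=
    hadj (by simp [Bgraph, boxProd_adj])
  have spoke (i : Fin 2) (j : Fin t) : H.Adj (π (f (i, .inl 0))) (π (f (i, .inr j))) :=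
    hadj (by simp [Bgraph, boxProd_adj])
  have rung (j : Fin t) : H.Adj (π (f (0, .inr j))) (π (f (1, .inr j))) :=
    hadj (by simp [Bgraph, boxProd_adj])
  -- The `j`-th `4`-cycle is mapped to a closed walk of length `4`, which must fold.
  have fold (j : Fin t) : ∃ i : Fin 2,
      π (f (i, .inr j)) ∈ ({π (f (0, .inl 0)), π (f (1, .inl 0))} : Set W) := by
    rcases hH.eq_or_eq_of_adj spine (spoke 1 j) (rung j).symm (spoke 0 j).symm with h | h
    · exact ⟨1, .inl h.symm⟩
    · exact ⟨0, .inr h.symm⟩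
  choose i hi using fold
  let g : Fin 2 ⊕ Fin t → V := fun s => f (Sum.elim (·, .inl 0) (fun j => (i j, .inr j)) s)
  have hg : Function.Injective g := hf.comp <|
    Function.Injective.sumElim (fun a b h => congrArg Prod.fst h)
      (fun a b h => Sum.inr_injective (congrArg Prod.snd h)) (by simp)
  have hrange : Set.range g ⊆ π ⁻¹' {π (f (0, .inl 0)), π (f (1, .inl 0))} := by
    rintro _ ⟨a | j, rfl⟩
    · fin_cases a <;> simp [g]
    · exact hi j
  have hcard : ((2 + t : ℕ) : ℕ∞) ≤ (t + 1 : ℕ) := by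
    simpa using hg.encard_range.trans ((Set.encard_le_encard hrange).trans (hπ spine))
  have := Nat.cast_le.mp hcard
  omega

end C4Free

section IncidenceGraph

variable {P L : Type*}

/-- The bipartite graph of an incidence relation `I` between points and lines. -/
def incidenceGraph (I : P → L → Prop) : SimpleGraph (P ⊕ L) where
  Adj
    | .inl p, .inr l => I p l
    | .inr l, .inl p => I p l
    | _, _ => False
  symm := ⟨by rintro (p | l) (q | m) h <;> exact h⟩
  loopless := ⟨by rintro (p | l) h <;> exact h⟩

theorem incidenceGraph_colorable_two (I : P → L → Prop) : (incidenceGraph I).Colorable 2 :=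
  ⟨Coloring.mk (Sum.elim (fun _ => 0) (fun _ => 1)) <| by
    rintro (p | l) (q | m) h <;> simp_all [incidenceGraph]⟩

theorem isC4Free_incidenceGraph {I : P → L → Prop}
    (hI : ∀ ⦃p p' l l'⦄, I p l → I p' l → I p l' → I p' l' → p = p' ∨ l = l') :
    IsC4Free (incidenceGraph I) := by
  rintro (p | l) (p' | l') hne (q | m) ⟨h₁, h₂⟩ (q' | m') ⟨h₃, h₄⟩ <;>
    first
    | exact h₁.elim
    | exact h₂.elim
    | exact h₃.elim
    | exact congrArg Sum.inr ((hI h₁ h₂ h₃ h₄).resolve_left (by simpa using hne))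
    | exact congrArg Sum.inl ((hI h₁ h₃ h₂ h₄).resolve_right (by simpa using hne))

theorem ncard_edgeSet_incidenceGraph (I : P → L → Prop) :
    (incidenceGraph I).edgeSet.ncard = {x : P × L | I x.1 x.2}.ncard := by
  have himage : (incidenceGraph I).edgeSet =
      (fun x : P × L => s(Sum.inl x.1, Sum.inr x.2)) '' {x | I x.1 x.2} := by
    ext e
    induction e with | _ x y
    rcases x with p | l <;> rcases y with q | m <;> simp [incidenceGraph]
  rw [himage, Set.ncard_image_of_injective]
  rintro ⟨p, l⟩ ⟨q, m⟩ h
  simpa using h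

theorem incidenceGraph_blowup (ι κ : Type*) (I : P → L → Prop) :
    incidenceGraph (fun (p : P × ι) (l : L × κ) => I p.1 l.1) =
      (incidenceGraph I).comap (Sum.map Prod.fst Prod.fst) := by
  ext (p | l) (q | m) <;> rfl

theorem encard_fibre_blowup (ι κ : Type*) {I : P → L → Prop} ⦃x y : P ⊕ L⦄
    (h : (incidenceGraph I).Adj x y) :
    (Sum.map (Prod.fst : P × ι → P) (Prod.fst : L × κ → L) ⁻¹' {x, y}).encard =
      ENat.card ι + ENat.card κ := by
  wlog hx : x.isLeft generalizing x y
  · rw [Set.pair_comm]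
    exact this h.symm (by rcases x with p | l <;> rcases y with q | m <;> simp_all [incidenceGraph])
  obtain ⟨p, rfl⟩ := Sum.isLeft_iff.mp hx
  rcases y with q | l
  · exact h.elim
  have hrange : Sum.map (Prod.fst : P × ι → P) (Prod.fst : L × κ → L) ⁻¹' {.inl p, .inr l} =
      Set.range (Sum.map (Prod.mk p) (Prod.mk l)) := by
    ext (⟨q, i⟩ | ⟨m, j⟩) <;> simp [eq_comm]
  rw [hrange, ← Set.image_univ, Function.Injective.encard_image, Set.encard_univ, ENat.card_sum]
  exact (Prod.mk_right_injective p).sumMap (Prod.mk_right_injective l)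

theorem ncard_incidences_blowup (ι κ : Type*) (I : P → L → Prop) :
    {x : (P × ι) × (L × κ) | I x.1.1 x.2.1}.ncard =
      Nat.card ι * Nat.card κ * {x : P × L | I x.1 x.2}.ncard := by
  have hpre : {x : (P × ι) × (L × κ) | I x.1.1 x.2.1} =
      Equiv.prodProdProdComm P ι L κ ⁻¹' ({x : P × L | I x.1 x.2} ×ˢ Set.univ) := by
    ext x
    simp
  rw [hpre, Set.ncard_preimage_of_injective_subset_range (Equiv.injective _) (by simp),
    Set.ncard_prod, Set.ncard_univ, Nat.card_prod, mul_comm]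

end IncidenceGraph

section AffinePlane

/-- The point `(x, y)` lies on the line `y = m x + b`, encoded as the pair `(m, b)`. -/
def affineIncidence (R : Type*) [Semiring R] (p l : R × R) : Prop :=
  p.2 = l.1 * p.1 + l.2

theorem affineIncidence_unique {R : Type*} [CommRing R] [NoZeroDivisors R] ⦃p p' l l' : R × R⦄
    (h₁ : affineIncidence R p l) (h₂ : affineIncidence R p' l) (h₃ : affineIncidence R p l')
    (h₄ : affineIncidence R p' l') : p = p' ∨ l = l' := by
  obtain ⟨x, y⟩ := p
  obtain ⟨x', y'⟩ := p'
  obtain ⟨m, b⟩ := l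
  obtain ⟨m', b'⟩ := l'
  simp only [affineIncidence] at h₁ h₂ h₃ h₄
  have hprod : (m - m') * (x - x') = 0 := by grind
  rcases mul_eq_zero.mp hprod with h | h
  · grind
  · grind

theorem ncard_affineIncidence (R : Type*) [Semiring R] :
    {x : (R × R) × (R × R) | affineIncidence R x.1 x.2}.ncard = Nat.card R ^ 3 := by
  have hrange : {x : (R × R) × (R × R) | affineIncidence R x.1 x.2} =
      Set.range fun z : R × R × R => ((z.1, z.2.1 * z.1 + z.2.2), z.2) := by
    ext ⟨⟨x, y⟩, l⟩
    simp [affineIncidence, eq_comm, Prod.ext_iff]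
  rw [hrange, ← Set.image_univ, Set.ncard_image_of_injective, Set.ncard_univ, Nat.card_prod,
    Nat.card_prod]
  · ring
  · rintro ⟨x, l⟩ ⟨x', l'⟩ h
    simp_all

end AffinePlane

section Construction

theorem exists_adj_Bgraph (t : ℕ) (a) : ∃ b, (Bgraph t).Adj a b :=
  ⟨(a.1 + 1, a.2), by simp [Bgraph, boxProd_adj]⟩

theorem ContainsCopy.of_map {α V W : Type*} {F : SimpleGraph α} {G : SimpleGraph V} {e : V ↪ W}
    (hF : ∀ a, ∃ b, F.Adj a b) (h : ContainsCopy F (G.map e)) : ContainsCopy F G := by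
  obtain ⟨f, hf, hadj⟩ := h
  have hlift (a : α) : ∃ v, e v = f a := by
    obtain ⟨b, hab⟩ := hF a
    obtain ⟨v, _, _, hv, _⟩ := (G.map_adj e _ _).mp (hadj hab)
    exact ⟨v, hv⟩
  choose g hg using hlift
  refine ⟨g, fun a b hab => hf (by rw [← hg, ← hg, hab]), fun a b hab => ?_⟩
  simpa only [← hg, map_adj_apply] using hadj hab

theorem exists_blowup_affinePlane (F : Type*) [Field F] {k l t : ℕ} (hkl : k + l = t + 1) :
    ∃ G : SimpleGraph ((F × F) × Fin k ⊕ (F × F) × Fin l), G.Colorable 2 ∧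
      ¬ ContainsCopy (Bgraph t) G ∧ G.edgeSet.ncard = k * l * Nat.card F ^ 3 := by
  refine ⟨incidenceGraph fun p l => affineIncidence F p.1 l.1, incidenceGraph_colorable_two _,
    ?_, ?_⟩
  · rw [incidenceGraph_blowup]
    refine (isC4Free_incidenceGraph affineIncidence_unique).not_containsCopy_Bgraph_comap ?_
    intro x y hxy
    rw [encard_fibre_blowup _ _ hxy, ENat.card_eq_coe_fintype_card, ENat.card_eq_coe_fintype_card,
      Fintype.card_fin, Fintype.card_fin]
    exact_mod_cast hkl.le
  · rw [ncard_edgeSet_incidenceGraph, ncard_incidences_blowup _ _ (affineIncidence F),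
      ncard_affineIncidence, Nat.card_fin, Nat.card_fin]

theorem exists_Bgraph_free_of_isPrimePow {q : ℕ} (hq : IsPrimePow q) {k l t n : ℕ}
    (hkl : k + l = t + 1) (hn : (t + 1) * q ^ 2 ≤ n) :
    ∃ G : SimpleGraph (Fin n), G.Colorable 2 ∧ ¬ ContainsCopy (Bgraph t) G ∧
      G.edgeSet.ncard = k * l * q ^ 3 := by
  obtain ⟨_⟩ : Nonempty (Field (Fin q)) := Fintype.nonempty_field_iff.mpr (by simpa using hq)
  obtain ⟨G, hcol, hfree, hcard⟩ := exists_blowup_affinePlane (Fin q) hkl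
  obtain ⟨e⟩ : Nonempty ((Fin q × Fin q) × Fin k ⊕ (Fin q × Fin q) × Fin l ↪ Fin n) :=
    Function.Embedding.nonempty_of_card_le <| by
      simp only [Fintype.card_sum, Fintype.card_prod, Fintype.card_fin]
      rwa [← mul_add, hkl, mul_comm, ← sq]
  refine ⟨G.map e, hcol.map e, fun h => hfree (h.of_map (exists_adj_Bgraph t)), ?_⟩
  rw [edgeSet_map, Set.ncard_image_of_injective _ e.sym2Map.injective, hcard, Nat.card_fin]

end Construction

section Asymptotics

open Filter Topology

theorem tendsto_sqrt_natCast_div_atTop {c : ℝ} (hc : 0 < c) :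
    Tendsto (fun n : ℕ => √(n / c)) atTop atTop :=
  Real.tendsto_sqrt_atTop.comp (tendsto_natCast_atTop_atTop.atTop_div_const hc)

theorem sqrt_div_pow_three {a b : ℝ} (ha : 0 ≤ a) (hb : 0 ≤ b) :
    √(a / b) ^ 3 = a ^ (3 / 2 : ℝ) / b ^ (3 / 2 : ℝ) := by
  rw [Real.sqrt_eq_rpow, ← Real.rpow_mul_natCast (div_nonneg ha hb), ← Real.div_rpow ha hb]
  norm_num

theorem exists_lt_one_sub_le_mul_pow (C : ℝ) {ε : ℝ} (hε : 0 < ε) (m : ℕ) :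
    ∃ η : ℝ, 0 < η ∧ η < 1 ∧ C - ε ≤ C * η ^ m := by
  have hcont : Continuous fun η : ℝ => C * η ^ m := by fun_prop
  have hnear : ∀ᶠ η in 𝓝[<] (1 : ℝ), C - ε < C * η ^ m :=
    ((hcont.tendsto 1).mono_left nhdsWithin_le_nhds).eventually (lt_mem_nhds (by simpa using hε))
  obtain ⟨η, hη, hη₀, hη₁⟩ := (hnear.and (Ioo_mem_nhdsLT zero_lt_one)).exists
  exact ⟨η, hη₀, hη₁, hη.le⟩

theorem eventually_exists_Bgraph_free {k l t : ℕ} (hkl : k + l = t + 1) {ε : ℝ} (hε : 0 < ε) :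
    ∀ᶠ n : ℕ in atTop, ∃ G : SimpleGraph (Fin n), G.Colorable 2 ∧ ¬ ContainsCopy (Bgraph t) G ∧
      (k * l / ((t : ℝ) + 1) ^ (3 / 2 : ℝ) - ε) * (n : ℝ) ^ (3 / 2 : ℝ) ≤ G.edgeSet.ncard := by
  have ht : (0 : ℝ) < t + 1 := by positivity
  obtain ⟨η, hη₀, hη₁, hη⟩ :=
    exists_lt_one_sub_le_mul_pow (k * l / ((t : ℝ) + 1) ^ (3 / 2 : ℝ)) hε 3
  filter_upwards [(tendsto_sqrt_natCast_div_atTop ht).eventually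
    (eventually_exists_isPrimePow_mem_Icc hη₀ hη₁)] with n ⟨q, hq, hq_lower, hq_upper⟩
  have hqn : (t + 1) * q ^ 2 ≤ n := by
    have hsq := (Real.le_sqrt (Nat.cast_nonneg q) (by positivity)).mp hq_upper
    rw [le_div_iff₀' ht] at hsq
    exact_mod_cast hsq
  obtain ⟨G, hcol, hfree, hcard⟩ := exists_Bgraph_free_of_isPrimePow hq hkl hqn
  refine ⟨G, hcol, hfree, ?_⟩
  calc (k * l / ((t : ℝ) + 1) ^ (3 / 2 : ℝ) - ε) * (n : ℝ) ^ (3 / 2 : ℝ)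
      ≤ k * l / ((t : ℝ) + 1) ^ (3 / 2 : ℝ) * η ^ 3 * (n : ℝ) ^ (3 / 2 : ℝ) := by gcongr
    _ = k * l * (η * √(n / (t + 1))) ^ 3 := by
        rw [mul_pow, sqrt_div_pow_three n.cast_nonneg ht.le]
        ring
    _ ≤ k * l * (q : ℝ) ^ 3 := by gcongr
    _ = G.edgeSet.ncard := by rw [hcard]; push_cast; rfl

theorem exists_add_eq_add_one_and_le_mul (t : ℕ) :
    ∃ k l : ℕ, k + l = t + 1 ∧ t * (t + 2) ≤ 4 * (k * l) := by
  obtain ⟨m, rfl | rfl⟩ := t.even_or_odd'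
  · exact ⟨m, m + 1, by ring, by nlinarith⟩
  · exact ⟨m + 1, m + 1, by ring, by nlinarith⟩

theorem ex_bip_Bt_lower_even_general (t : ℕ) (ε : ℝ) (hε : 0 < ε) :
    ∃ N : ℕ, ∀ n : ℕ, N ≤ n → ∃ G : SimpleGraph (Fin n),
      G.Colorable 2 ∧ ¬ ContainsCopy (Bgraph t) G ∧
      ((1 / 4 : ℝ) * ((t : ℝ) * ((t : ℝ) + 2)) / ((t : ℝ) + 1) ^ (3 / 2 : ℝ) - ε)
          * (n : ℝ) ^ (3 / 2 : ℝ)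
        ≤ (G.edgeSet.ncard : ℝ) := by
  obtain ⟨k, l, hkl, hle⟩ := exists_add_eq_add_one_and_le_mul t
  have hcoeff : (1 / 4 : ℝ) * (t * (t + 2)) ≤ k * l := by
    have : (t * (t + 2) : ℝ) ≤ 4 * (k * l) := by exact_mod_cast hle
    linarith
  obtain ⟨N, hN⟩ := eventually_atTop.mp (eventually_exists_Bgraph_free hkl hε)
  refine ⟨N, fun n hn => ?_⟩
  obtain ⟨G, hcol, hfree, hcard⟩ := hN n hn
  refine ⟨G, hcol, hfree, le_trans ?_ hcard⟩
  gcongr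

end Asymptotics

theorem ex_bip_Bt_lower_even (t : ℕ) (ht : 2 ≤ t) (heven : Even t) (ε : ℝ) (hε : 0 < ε) :
    ∃ N : ℕ, ∀ n : ℕ, N ≤ n → ∃ G : SimpleGraph (Fin n),
      G.Colorable 2 ∧ ¬ ContainsCopy (Bgraph t) G ∧
      ((1 / 4 : ℝ) * ((t : ℝ) * ((t : ℝ) + 2)) / ((t : ℝ) + 1) ^ (3/2 : ℝ) - ε)
          * (n : ℝ) ^ (3/2 : ℝ)
        ≤ (G.edgeSet.ncard : ℝ) :=
  ex_bip_Bt_lower_even_general t ε hε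
end

section
/- For every real c > 0 and every ε > 0 there exists N such that for all n ≥ N, every graph G on n vertices containing no subgraph isomorphic to B_2 and having minimum degree δ(G) ≥ c·n^{1/2} satisfies e(G) ≤ ((−c + √(c² + 32))/8 + ε)·n^{3/2}. -/
open SimpleGraph

/-!
Give every path `x - v - w`, degenerate ones `x = w` included, the weight `2 / codeg(x, w) - 1`.
The paths from `x` to `w` together weigh at most `2 - codeg(x, w)`, so all of them together weigh
at most `2 n² - ∑ d(v)²`.

In the other direction, in a `B₂`-free graph any two 4-cycles through an edge `xv` meet in a third
vertex. Hence either boundedly many vertices lie on these 4-cycles, and nearly all paths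
`x - v - w` have `codeg(x, w) = 1` and weight `1`; or all these 4-cycles pass through a single
vertex `z`, and nearly all of these paths have `codeg(x, w) ≤ 2` and nonnegative weight. The darts
can be paired so that each pair carries weight at least `δ - 16`. The partner of `xv` is `vx`,
unless `xvz` is a triangle each of whose vertices is the `z` of the opposite edge. Then it is `zv`:
since `K_{3,3}` contains `B₂`, at most two neighbours `w` of `v` are adjacent to both `x` and `z`,
and for nearly all others one of the paths `x - v - w` and `z - v - w` has weight `1` and the other
is nonnegative. Comparing the two estimates gives `4 e² + e (δ - 16) n ≤ 2 n³`.
-/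

open Finset

theorem mul_card_sub_le_sum {ι : Type*} {s : Finset ι} (T : Finset ι) {g : ι → ℝ} {lo hi : ℝ}
    (hlohi : lo ≤ hi) (hlo : ∀ i ∈ s, lo ≤ g i) (hhi : ∀ i ∈ s, i ∉ T → hi ≤ g i) :
    hi * #s - (hi - lo) * #T ≤ ∑ i ∈ s, g i := by
  classical
  have hcard : (#{i ∈ s | i ∈ T} : ℝ) ≤ #T := by
    exact_mod_cast card_le_card fun i hi ↦ (mem_filter.1 hi).2
  calc hi * #s - (hi - lo) * #T
      ≤ hi * #s - (hi - lo) * #{i ∈ s | i ∈ T} := by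
        have : 0 ≤ hi - lo := sub_nonneg.2 hlohi
        gcongr
    _ = ∑ i ∈ s, (hi - (hi - lo) * if i ∈ T then 1 else 0) := by
        rw [sum_sub_distrib, ← mul_sum, sum_const, nsmul_eq_mul, sum_boole, mul_comm hi]
    _ ≤ ∑ i ∈ s, g i := by
        refine sum_le_sum fun i his ↦ ?_
        split_ifs with hiT
        · linarith [hlo i his]
        · linarith [hhi i his hiT]

theorem sum_darts {V M : Type*} [Fintype V] (G : SimpleGraph V) [DecidableRel G.Adj]
    [AddCommMonoid M] (f : V → V → M) :
    ∑ d : G.Dart, f d.fst d.snd = ∑ v, ∑ w ∈ G.neighborFinset v, f v w := by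
  rw [sum_sigma']
  exact sum_bij' (fun d _ ↦ ⟨d.fst, d.snd⟩)
    (fun p hp ↦ ⟨(p.1, p.2), by simpa using hp⟩) (by simp) (by simp) (by simp) (by simp) (by simp)

theorem star_or_card_le_three_of_intersecting {α : Type*} {P : α → α → Prop}
    (hP : ∀ {a b a' b'}, P a b → P a' b' → a = a' ∨ a = b' ∨ b = a' ∨ b = b') :
    (∃ z, ∀ a b, P a b → a = z ∨ b = z) ∨
      ∃ T : Finset α, #T ≤ 3 ∧ ∀ a b, P a b → a ∈ T ∧ b ∈ T := by
  classical
  by_cases hne : ∃ a b, P a b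
  swap
  · push Not at hne
    exact .inr ⟨∅, by simp, fun a b hab ↦ absurd hab (hne a b)⟩
  obtain ⟨a, b, hab⟩ := hne
  by_cases ha : ∀ p q, P p q → p = a ∨ q = a
  · exact .inl ⟨a, ha⟩
  by_cases hb : ∀ p q, P p q → p = b ∨ q = b
  · exact .inl ⟨b, hb⟩
  push Not at ha hb
  obtain ⟨p, q, hpq, hpa, hqa⟩ := ha
  obtain ⟨r, s, hrs, hrb, hsb⟩ := hb
  have hab_pq := hP hab hpq
  have hab_rs := hP hab hrs
  have hpq_rs := hP hpq hrs
  obtain ⟨c, hca, hcb, hbc, hac⟩ :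
      ∃ c, c ≠ a ∧ c ≠ b ∧ (P b c ∨ P c b) ∧ (P a c ∨ P c a) := by
    by_cases hpb : p = b
    · exact ⟨q, by grind⟩
    · exact ⟨p, by grind⟩
  refine .inr ⟨{a, b, c}, card_le_three, fun y w hyw ↦ ?_⟩
  have meets_ab := hP hyw hab
  have meets_bc := hbc.imp (hP hyw) (hP hyw)
  have meets_ac := hac.imp (hP hyw) (hP hyw)
  simp only [mem_insert, mem_singleton]
  grind

section Pages

variable {V : Type*} {G : SimpleGraph V} {x v z a b a' b' : V}

/-- The vertices `x, v, b, a` form a 4-cycle of `G` in this cyclic order. It is regarded as a page,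
with outer side `ab`, of a book with spine `xv`; the graph `B₂` is a book with two pages. -/
structure IsPage (G : SimpleGraph V) (x v a b : V) : Prop where
  spine : G.Adj x v
  left : G.Adj x a
  right : G.Adj v b
  outer : G.Adj a b
  left_ne : a ≠ v
  right_ne : b ≠ x

namespace IsPage

theorem symm (h : IsPage G x v a b) : IsPage G v x b a :=
  ⟨h.spine.symm, h.right, h.left, h.outer.symm, h.right_ne, h.left_ne⟩

theorem rotate (h : IsPage G x v a b) : IsPage G x a v b :=
  ⟨h.left, h.spine, h.outer, h.right, h.left_ne.symm, h.right_ne⟩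

theorem meet (hG : ¬ ContainsCopy (Bgraph 2) G) (h : IsPage G x v a b)
    (h' : IsPage G x v a' b') : a = a' ∨ a = b' ∨ b = a' ∨ b = b' := by
  by_contra! hdisj
  obtain ⟨haa', hab', hba', hbb'⟩ := hdisj
  let f : Fin 2 × (Fin 1 ⊕ Fin 2) → V := fun p ↦
    p.2.elim (fun _ ↦ ![x, v] p.1) fun j ↦ ![![a, b], ![a', b']] j p.1
  refine hG ⟨f, ?_, ?_⟩
  · have := h.spine.ne
    have := h.left.ne
    have := h.right.ne
    have := h.outer.ne
    have := h.left_ne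
    have := h.right_ne
    have := h'.left.ne
    have := h'.right.ne
    have := h'.outer.ne
    have := h'.left_ne
    have := h'.right_ne
    simp only [Function.Injective, f, Prod.forall, Sum.forall, Fin.forall_fin_two,
      Fin.forall_fin_one, Sum.elim_inl, Sum.elim_inr, Matrix.cons_val_zero, Matrix.cons_val_one]
    grind
  · simp only [Bgraph, boxProd_adj, top_adj, completeBipartiteGraph_adj, f, Prod.forall, Sum.forall,
      Fin.forall_fin_two, Fin.forall_fin_one, Sum.elim_inl, Sum.elim_inr, Matrix.cons_val_zero,
      Matrix.cons_val_one]
    grind [IsPage, SimpleGraph.Adj.symm]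

end IsPage

theorem card_le_two_of_common_neighbors (hG : ¬ ContainsCopy (Bgraph 2) G) {S : Finset V}
    (hxv : x ≠ v) (hxz : x ≠ z) (hvz : v ≠ z)
    (hS : ∀ p ∈ S, G.Adj x p ∧ G.Adj v p ∧ G.Adj z p) : #S ≤ 2 := by
  by_contra! hcard
  obtain ⟨p, hp, q, hq, r, hr, hpq, hpr, hqr⟩ := two_lt_card.1 hcard
  obtain ⟨hxp, hvp, hzp⟩ := hS p hp
  obtain ⟨hxq, hvq, hzq⟩ := hS q hq
  obtain ⟨hxr, hvr, hzr⟩ := hS r hr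
  have page_q : IsPage G x p q v := ⟨hxp, hxq, hvp.symm, hvq.symm, hpq.symm, hxv.symm⟩
  have page_r : IsPage G x p r z := ⟨hxp, hxr, hzp.symm, hzr.symm, hpr.symm, hxz.symm⟩
  rcases page_q.meet hG page_r with h | h | h | h
  exacts [hqr h, hzq.ne h.symm, hvr.ne h, hvz h]

/-- Every page with spine `xv` passes through `z`. If the spine has no page, every vertex is a
centre. -/
def IsCentre (G : SimpleGraph V) (x v z : V) : Prop :=
  ∀ a b, IsPage G x v a b → a = z ∨ b = z

theorem IsCentre.symm (h : IsCentre G x v z) : IsCentre G v x z :=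
  fun a b hab ↦ (h b a hab.symm).symm

/-- `z` is the only vertex outside the spine `xv` shared by all pages with this spine. -/
def IsUniqueCentre (G : SimpleGraph V) (x v z : V) : Prop :=
  IsCentre G x v z ∧ ∀ z', IsCentre G x v z' → z' = z

theorem IsUniqueCentre.symm (h : IsUniqueCentre G x v z) : IsUniqueCentre G v x z :=
  ⟨h.1.symm, fun z' hz' ↦ h.2 z' hz'.symm⟩

theorem isUniqueCentre_of_two_lt_card (hG : ¬ ContainsCopy (Bgraph 2) G) {S : Finset V}
    (hS : 2 < #S) (hpage : ∀ b ∈ S, IsPage G x v z b) : IsUniqueCentre G x v z := by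
  obtain ⟨p, hp, q, hq, r, hr, hpq, hpr, hqr⟩ := two_lt_card.1 hS
  refine ⟨fun a b hab ↦ ?_, fun z' hz' ↦ ?_⟩
  · have meets_p := hab.meet hG (hpage p hp)
    have meets_q := hab.meet hG (hpage q hq)
    have meets_r := hab.meet hG (hpage r hr)
    grind
  · rcases hz' z p (hpage p hp) with h | h
    · exact h.symm
    · rcases hz' z q (hpage q hq) with h' | h'
      exacts [h'.symm, absurd (h.trans h'.symm) hpq]

/-- A triangle each of whose vertices is the unique centre of the opposite edge. Only the edges of
such triangles can have little weight in both orientations. -/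
structure IsCentredTriangle (G : SimpleGraph V) (x v z : V) : Prop where
  adj_fst_snd : G.Adj x v
  adj_fst_trd : G.Adj x z
  adj_snd_trd : G.Adj v z
  centre_trd : IsUniqueCentre G x v z
  centre_fst : IsUniqueCentre G v z x
  centre_snd : IsUniqueCentre G x z v

namespace IsCentredTriangle

theorem swap (h : IsCentredTriangle G x v z) : IsCentredTriangle G v x z :=
  ⟨h.adj_fst_snd.symm, h.adj_snd_trd, h.adj_fst_trd, h.centre_trd.symm, h.centre_snd,
    h.centre_fst⟩

theorem reverse (h : IsCentredTriangle G x v z) : IsCentredTriangle G z v x :=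
  ⟨h.adj_snd_trd.symm, h.adj_fst_trd.symm, h.adj_fst_snd.symm, h.centre_fst.symm,
    h.centre_trd.symm, h.centre_snd.symm⟩

theorem of_two_lt_card (hG : ¬ ContainsCopy (Bgraph 2) G) {S T : Finset V}
    (hS : 2 < #S) (hxv : ∀ b ∈ S, IsPage G x v z b)
    (hT : 2 < #T) (hvx : ∀ b ∈ T, IsPage G v x z b) : IsCentredTriangle G x v z := by
  obtain ⟨p, hp⟩ := card_pos.1 (zero_lt_two.trans hS)
  obtain ⟨q, hq⟩ := card_pos.1 (zero_lt_two.trans hT)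
  exact
    { adj_fst_snd := (hxv p hp).spine
      adj_fst_trd := (hxv p hp).left
      adj_snd_trd := (hvx q hq).left
      centre_trd := isUniqueCentre_of_two_lt_card hG hS hxv
      centre_fst := isUniqueCentre_of_two_lt_card hG hT fun b hb ↦ (hvx b hb).rotate
      centre_snd := isUniqueCentre_of_two_lt_card hG hS fun b hb ↦ (hxv b hb).rotate }

end IsCentredTriangle

open Classical in
/-- The pairing of darts: an edge `xv` of a centred triangle `xvz` is paired with `zv`, any other
dart with its reverse. -/
noncomputable def pairedDart (d : G.Dart) : G.Dart :=
  if h : ∃ z, IsCentredTriangle G d.fst d.snd z then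
    ⟨(h.choose, d.snd), h.choose_spec.adj_snd_trd.symm⟩
  else d.symm

theorem pairedDart_of_isCentredTriangle {d : G.Dart} (h : IsCentredTriangle G d.fst d.snd z) :
    pairedDart d = ⟨(z, d.snd), h.adj_snd_trd.symm⟩ := by
  have hex : ∃ z, IsCentredTriangle G d.fst d.snd z := ⟨z, h⟩
  have hz : hex.choose = z := h.centre_trd.2 _ hex.choose_spec.centre_trd.1
  rw [pairedDart, dif_pos hex]
  exact Dart.ext _ _ (Prod.ext hz rfl)

theorem pairedDart_of_not_isCentredTriangle {d : G.Dart}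
    (h : ¬ ∃ z, IsCentredTriangle G d.fst d.snd z) : pairedDart d = d.symm :=
  dif_neg h

theorem pairedDart_involutive : Function.Involutive (pairedDart (G := G)) := by
  intro d
  by_cases hd : ∃ z, IsCentredTriangle G d.fst d.snd z
  · obtain ⟨z, hz⟩ := hd
    rw [pairedDart_of_isCentredTriangle hz]
    exact pairedDart_of_isCentredTriangle hz.reverse
  · rw [pairedDart_of_not_isCentredTriangle hd, pairedDart_of_not_isCentredTriangle, d.symm_symm]
    exact fun ⟨z, hz⟩ ↦ hd ⟨z, hz.swap⟩

end Pages

section Weights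

variable {V : Type*} [Fintype V] [DecidableEq V] {G : SimpleGraph V} [DecidableRel G.Adj]
  {x v w z : V}

/-- The number of common neighbours of `x` and `w`; for `x = w` it is the degree. -/
def codegree (G : SimpleGraph V) [DecidableRel G.Adj] (x w : V) : ℕ :=
  #(G.neighborFinset x ∩ G.neighborFinset w)

/-- The weight of each path of length two from `x` to `w`. If there is none, the convention
`2 / 0 = 0` makes this `-1`. -/
noncomputable def pathWeight (G : SimpleGraph V) [DecidableRel G.Adj] (x w : V) : ℝ :=
  2 / codegree G x w - 1

/-- The total weight of the paths of length two whose first step is the dart `xv`. -/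
noncomputable def dartWeight (G : SimpleGraph V) [DecidableRel G.Adj] (x v : V) : ℝ :=
  ∑ w ∈ G.neighborFinset v, pathWeight G x w

theorem neg_one_le_pathWeight (G : SimpleGraph V) [DecidableRel G.Adj] (x w : V) :
    -1 ≤ pathWeight G x w := by
  have : (0 : ℝ) ≤ 2 / codegree G x w := by positivity
  rw [pathWeight]
  linarith

theorem codegree_mul_pathWeight_le (G : SimpleGraph V) [DecidableRel G.Adj] (x w : V) :
    codegree G x w * pathWeight G x w ≤ 2 - codegree G x w := by
  rw [pathWeight]
  rcases eq_or_ne (codegree G x w : ℝ) 0 with h | h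
  · simp [h]
  · exact le_of_eq (by field_simp)

theorem two_div_card_sub_one_le_pathWeight {T : Finset V} (hxv : G.Adj x v) (hvw : G.Adj v w)
    (hT : ∀ a, G.Adj x a → G.Adj a w → a ∈ T) : 2 / (#T : ℝ) - 1 ≤ pathWeight G x w := by
  have hpos : 0 < codegree G x w := card_pos.2 ⟨v, by simp [hxv, hvw.symm]⟩
  have hle : codegree G x w ≤ #T := card_le_card fun a ha ↦ by
    simp only [mem_inter, mem_neighborFinset] at ha
    exact hT a ha.1 ha.2.symm
  rw [pathWeight]
  gcongr

theorem one_le_pathWeight_of_not_isPage (hxv : G.Adj x v) (hvw : G.Adj v w) (hwx : w ≠ x)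
    (hpage : ∀ a, ¬ IsPage G x v a w) : 1 ≤ pathWeight G x w := by
  have := two_div_card_sub_one_le_pathWeight (T := {v}) hxv hvw fun a hxa haw ↦ by
    by_contra hav
    exact hpage a ⟨hxv, hxa, hvw, haw, notMem_singleton.1 hav, hwx⟩
  norm_num at this
  exact this

theorem pathWeight_nonneg_of_isPage_imp_eq (hxv : G.Adj x v) (hvw : G.Adj v w) (hwx : w ≠ x)
    (hpage : ∀ a, IsPage G x v a w → a = z) : 0 ≤ pathWeight G x w := by
  have hT := two_div_card_sub_one_le_pathWeight (T := {v, z}) hxv hvw fun a hxa haw ↦ by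
    rw [mem_insert, mem_singleton, or_iff_not_imp_left]
    exact fun hav ↦ hpage a ⟨hxv, hxa, hvw, haw, hav, hwx⟩
  have hcard : (#{v, z} : ℝ) ≤ 2 := by exact_mod_cast card_le_two
  have : 1 ≤ 2 / (#{v, z} : ℝ) := (one_le_div₀ (by simp)).2 hcard
  linarith

theorem IsCentre.pathWeight_nonneg (h : IsCentre G x v z) (hxv : G.Adj x v) (hvw : G.Adj v w)
    (hwx : w ≠ x) (hwz : w ≠ z) : 0 ≤ pathWeight G x w :=
  pathWeight_nonneg_of_isPage_imp_eq hxv hvw hwx fun a hpage ↦ (h a w hpage).resolve_right hwz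

theorem IsCentre.one_le_pathWeight (h : IsCentre G x v z) (hxv : G.Adj x v) (hvw : G.Adj v w)
    (hwx : w ≠ x) (hwz : w ≠ z) (hzw : ¬ G.Adj z w) : 1 ≤ pathWeight G x w :=
  one_le_pathWeight_of_not_isPage hxv hvw hwx fun a hpage ↦
    hzw ((h a w hpage).resolve_right hwz ▸ hpage.outer)

theorem IsCentre.neg_two_le_dartWeight (h : IsCentre G x v z) (hxv : G.Adj x v) :
    -2 ≤ dartWeight G x v := by
  have hsum := mul_card_sub_le_sum (s := G.neighborFinset v) {x, z} (neg_nonpos.2 zero_le_one)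
    (fun w _ ↦ neg_one_le_pathWeight G x w) fun w hvw hw ↦ by
      simp only [mem_insert, mem_singleton, not_or] at hw
      exact h.pathWeight_nonneg hxv ((G.mem_neighborFinset v w).1 hvw) hw.1 hw.2
  have hcard : (#{x, z} : ℝ) ≤ 2 := by exact_mod_cast card_le_two
  rw [dartWeight]
  linarith

theorem degree_sub_le_dartWeight_of_isPage_imp_mem {T : Finset V} (hxv : G.Adj x v)
    (hT : ∀ a b, IsPage G x v a b → b ∈ T) :
    (G.degree v : ℝ) - 2 * (#T + 1) ≤ dartWeight G x v := by
  have hsum := mul_card_sub_le_sum (s := G.neighborFinset v) (insert x T)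
    (neg_le_self zero_le_one) (fun w _ ↦ neg_one_le_pathWeight G x w) fun w hvw hw ↦ by
      rw [mem_insert, not_or] at hw
      exact one_le_pathWeight_of_not_isPage hxv ((G.mem_neighborFinset v w).1 hvw) hw.1
        fun a hpage ↦ hw.2 (hT a w hpage)
  have hcard : (#(insert x T) : ℝ) ≤ #T + 1 := by exact_mod_cast card_insert_le x T
  rw [card_neighborFinset_eq_degree] at hsum
  rw [dartWeight]
  linarith

theorem IsCentre.degree_sub_le_dartWeight {S : Finset V} (h : IsCentre G x v z)
    (hxv : G.Adj x v) (hcard : #S ≤ 2) (hS : ∀ b, IsPage G x v z b → b ∈ S) :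
    (G.degree v : ℝ) - 8 ≤ dartWeight G x v := by
  have hmem (a b : V) (hpage : IsPage G x v a b) : b ∈ insert z S := by
    rcases h a b hpage with rfl | rfl
    · exact mem_insert_of_mem (hS b hpage)
    · exact mem_insert_self b S
  have hweight := degree_sub_le_dartWeight_of_isPage_imp_mem hxv hmem
  have : (#(insert z S) : ℝ) ≤ 3 := by
    exact_mod_cast (card_insert_le z S).trans (Nat.succ_le_succ hcard)
  linarith

theorem le_dartWeight_add_of_isCentre (hG : ¬ ContainsCopy (Bgraph 2) G) {δ : ℝ}
    (hδx : δ ≤ G.degree x) (hδv : δ ≤ G.degree v) (hxv : G.Adj x v) (hz : IsCentre G x v z)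
    (htri : ¬ IsCentredTriangle G x v z) : δ - 10 ≤ dartWeight G x v + dartWeight G v x := by
  classical
  have hxv_weight := hz.neg_two_le_dartWeight hxv
  have hvx_weight := hz.symm.neg_two_le_dartWeight hxv.symm
  by_cases hS : #{b | IsPage G x v z b} ≤ 2
  · have := hz.degree_sub_le_dartWeight hxv hS (by simp)
    linarith
  by_cases hT : #{b | IsPage G v x z b} ≤ 2
  · have := hz.symm.degree_sub_le_dartWeight hxv.symm hT (by simp)
    linarith
  exact absurd (.of_two_lt_card hG (not_le.1 hS) (by simp) (not_le.1 hT) (by simp)) htri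

theorem degree_sub_le_dartWeight_add_of_card_le_three {T : Finset V} (hxv : G.Adj x v)
    (hcard : #T ≤ 3) (hT : ∀ a b, IsPage G x v a b → a ∈ T ∧ b ∈ T) :
    (G.degree v : ℝ) - 16 ≤ dartWeight G x v + dartWeight G v x := by
  have hxv_weight := degree_sub_le_dartWeight_of_isPage_imp_mem hxv
    fun a b hpage ↦ (hT a b hpage).2
  have hvx_weight := degree_sub_le_dartWeight_of_isPage_imp_mem hxv.symm
    fun a b hpage ↦ (hT b a hpage.symm).1
  have hcard' : (#T : ℝ) ≤ 3 := by exact_mod_cast hcard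
  have : (0 : ℝ) ≤ G.degree x := Nat.cast_nonneg _
  linarith

theorem IsCentredTriangle.one_le_pathWeight_add (h : IsCentredTriangle G x v z)
    (hvw : G.Adj v w) (hwx : w ≠ x) (hwz : w ≠ z) (hw : ¬ (G.Adj x w ∧ G.Adj z w)) :
    1 ≤ pathWeight G x w + pathWeight G z w := by
  have hxv := h.adj_fst_snd
  have hzv := h.adj_snd_trd.symm
  have hz := h.centre_trd.1
  have hx := h.centre_fst.1.symm
  by_cases hzw : G.Adj z w
  · have := hz.pathWeight_nonneg hxv hvw hwx hwz
    have := hx.one_le_pathWeight hzv hvw hwz hwx fun hxw ↦ hw ⟨hxw, hzw⟩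
    linarith
  · have := hz.one_le_pathWeight hxv hvw hwx hwz hzw
    have := hx.pathWeight_nonneg hzv hvw hwz hwx
    linarith

theorem IsCentredTriangle.degree_sub_le_dartWeight_add (hG : ¬ ContainsCopy (Bgraph 2) G)
    (h : IsCentredTriangle G x v z) :
    G.degree v - 12 ≤ dartWeight G x v + dartWeight G z v := by
  let K : Finset V := {w | G.Adj x w ∧ G.Adj v w ∧ G.Adj z w}
  have hK : #K ≤ 2 := card_le_two_of_common_neighbors hG h.adj_fst_snd.ne h.adj_fst_trd.ne
    h.adj_snd_trd.ne (by simp [K])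
  have hcard : (#(insert x (insert z K)) : ℝ) ≤ 4 := by
    have := card_insert_le x (insert z K)
    have := card_insert_le z K
    exact_mod_cast (by lia : #(insert x (insert z K)) ≤ 4)
  have hsum := mul_card_sub_le_sum (s := G.neighborFinset v) (insert x (insert z K))
    (g := fun w ↦ pathWeight G x w + pathWeight G z w) (lo := -2) (hi := 1) (by norm_num)
    (fun w _ ↦ by linarith [neg_one_le_pathWeight G x w, neg_one_le_pathWeight G z w])
    fun w hvw hw ↦ by
      rw [mem_neighborFinset] at hvw
      simp only [K, mem_insert, mem_filter_univ, not_or] at hw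
      exact h.one_le_pathWeight_add hvw hw.1 hw.2.1 fun hxz ↦ hw.2.2 ⟨hxz.1, hvw, hxz.2⟩
  rw [sum_add_distrib, card_neighborFinset_eq_degree] at hsum
  rw [dartWeight, dartWeight]
  linarith

theorem le_dartWeight_add_pairedDart (hG : ¬ ContainsCopy (Bgraph 2) G) {δ : ℝ}
    (hδ : ∀ u, δ ≤ G.degree u) (d : G.Dart) :
    δ - 16 ≤ dartWeight G d.fst d.snd + dartWeight G (pairedDart d).fst (pairedDart d).snd := by
  by_cases htri : ∃ z, IsCentredTriangle G d.fst d.snd z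
  · obtain ⟨z, hz⟩ := htri
    rw [pairedDart_of_isCentredTriangle hz]
    linarith [hz.degree_sub_le_dartWeight_add hG, hδ d.snd]
  · rw [pairedDart_of_not_isCentredTriangle htri, Dart.symm_toProd, Prod.fst_swap, Prod.snd_swap]
    rcases star_or_card_le_three_of_intersecting (IsPage.meet (x := d.fst) (v := d.snd) hG) with
      ⟨z, hz⟩ | ⟨T, hcard, hT⟩
    · linarith [le_dartWeight_add_of_isCentre hG (hδ d.fst) (hδ d.snd) d.adj hz
        fun h ↦ htri ⟨z, h⟩]
    · linarith [degree_sub_le_dartWeight_add_of_card_le_three d.adj hcard hT, hδ d.snd]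

theorem card_edgeFinset_mul_le_sum_dartWeight (hG : ¬ ContainsCopy (Bgraph 2) G) {δ : ℝ}
    (hδ : ∀ u, δ ≤ G.degree u) :
    #G.edgeFinset * (δ - 16) ≤ ∑ d : G.Dart, dartWeight G d.fst d.snd := by
  have hpair : ∑ d : G.Dart, dartWeight G (pairedDart d).fst (pairedDart d).snd =
      ∑ d : G.Dart, dartWeight G d.fst d.snd :=
    pairedDart_involutive.bijective.sum_comp fun d ↦ dartWeight G d.fst d.snd
  have hsum := card_nsmul_le_sum univ _ _ fun d _ ↦ le_dartWeight_add_pairedDart hG hδ d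
  rw [sum_add_distrib, hpair, card_univ, dart_card_eq_twice_card_edges, nsmul_eq_mul] at hsum
  push_cast at hsum
  linarith

theorem sum_paths (f : V → V → ℝ) :
    ∑ x, ∑ v ∈ G.neighborFinset x, ∑ w ∈ G.neighborFinset v, f x w =
      ∑ x, ∑ w, codegree G x w * f x w := by
  refine sum_congr rfl fun x _ ↦ ?_
  rw [sum_comm' (s' := fun w ↦ G.neighborFinset x ∩ G.neighborFinset w) (t' := univ)
    (by simp [adj_comm])]
  simp_rw [sum_const, nsmul_eq_mul, codegree]

theorem sum_codegree : ∑ x, ∑ w, (codegree G x w : ℝ) = ∑ v, (G.degree v : ℝ) ^ 2 := by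
  have h := sum_paths (G := G) fun _ _ ↦ 1
  rw [sum_comm' (s' := fun v ↦ G.neighborFinset v) (t' := univ) (by simp [adj_comm])] at h
  simpa [pow_two] using h.symm

theorem sum_dartWeight_le :
    ∑ d : G.Dart, dartWeight G d.fst d.snd ≤
      2 * (Fintype.card V : ℝ) ^ 2 - ∑ v, (G.degree v : ℝ) ^ 2 :=
  calc ∑ d : G.Dart, dartWeight G d.fst d.snd
      = ∑ x, ∑ w, codegree G x w * pathWeight G x w := by
        rw [sum_darts G (dartWeight G), ← sum_paths]
        rfl
    _ ≤ ∑ x, ∑ w, (2 - codegree G x w : ℝ) := by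
        gcongr with x _ w _
        exact codegree_mul_pathWeight_le G x w
    _ = 2 * (Fintype.card V : ℝ) ^ 2 - ∑ v, (G.degree v : ℝ) ^ 2 := by
        simp only [sum_sub_distrib, sum_codegree, sum_const, card_univ, nsmul_eq_mul]
        ring

end Weights

theorem four_mul_sq_card_edgeFinset_add_le {V : Type*} [Fintype V] {G : SimpleGraph V}
    [DecidableRel G.Adj] (hG : ¬ ContainsCopy (Bgraph 2) G) {δ : ℝ}
    (hδ : ∀ u, δ ≤ G.degree u) :
    4 * (#G.edgeFinset : ℝ) ^ 2 + #G.edgeFinset * (δ - 16) * Fintype.card V ≤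
      2 * (Fintype.card V : ℝ) ^ 3 := by
  classical
  have hweight := (card_edgeFinset_mul_le_sum_dartWeight hG hδ).trans sum_dartWeight_le
  have hcauchy : (2 * #G.edgeFinset : ℝ) ^ 2 ≤ Fintype.card V * ∑ v, (G.degree v : ℝ) ^ 2 := by
    have h := sq_sum_le_card_mul_sum_sq (s := univ) (f := fun v ↦ (G.degree v : ℝ))
    rw [← Nat.cast_sum, sum_degrees_eq_twice_card_edges] at h
    exact_mod_cast h
  linarith [mul_le_mul_of_nonneg_right hweight (Nat.cast_nonneg (α := ℝ) (Fintype.card V))]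

theorem le_of_four_mul_sq_add_le {c s e : ℝ} (hs : 0 ≤ s)
    (h : 4 * e ^ 2 + e * (c * s - 16) * s ^ 2 ≤ 2 * s ^ 6) :
    e ≤ (-c + √(c ^ 2 + 32)) / 8 * s ^ 3 + 4 * s ^ 2 := by
  obtain ⟨α, hα⟩ : ∃ α, α = (-c + √(c ^ 2 + 32)) / 8 := ⟨_, rfl⟩
  have hα_pos : 0 < α := by
    have : c < √(c ^ 2 + 32) := Real.lt_sqrt_of_sq_lt (by linarith)
    linarith
  have hroot : α * (4 * α + c) = 2 := by
    have : √(c ^ 2 + 32) ^ 2 = c ^ 2 + 32 := Real.sq_sqrt (by positivity)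
    rw [hα]
    linarith
  have hroot_pos : 0 < 4 * α + c := pos_of_mul_pos_right (hroot ▸ two_pos) hα_pos.le
  rw [← hα]
  by_contra! hlt
  have hfst : α * s ^ 3 < e := by linarith [sq_nonneg s]
  have hsnd : (4 * α + c) * s ^ 3 < 4 * e + (c * s - 16) * s ^ 2 := by linarith
  have := mul_lt_mul'' hfst hsnd (by positivity) (by positivity)
  have : α * s ^ 3 * ((4 * α + c) * s ^ 3) = 2 * s ^ 6 := by
    rw [← hroot]
    ring
  linarith

theorem B2_min_degree_upper_general {V : Type*} [Fintype V] {G : SimpleGraph V} {c : ℝ}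
    (hG : ¬ ContainsCopy (Bgraph 2) G)
    (hδ : ∀ v, c * (Fintype.card V : ℝ) ^ (1 / 2 : ℝ) ≤ ((G.neighborSet v).ncard : ℝ)) :
    (G.edgeSet.ncard : ℝ) ≤
      (-c + √(c ^ 2 + 32)) / 8 * (Fintype.card V : ℝ) ^ (3 / 2 : ℝ) + 4 * Fintype.card V := by
  classical
  have hn : (0 : ℝ) ≤ Fintype.card V := Nat.cast_nonneg _
  have hthree_half : (Fintype.card V : ℝ) ^ (3 / 2 : ℝ) = √(Fintype.card V) ^ 3 := by
    rw [Real.rpow_div_two_eq_sqrt 3 hn, Real.rpow_ofNat]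
  have hdeg (v : V) : c * √(Fintype.card V) ≤ G.degree v := by
    rw [Real.sqrt_eq_rpow, ← card_neighborFinset_eq_degree, ← Set.ncard_coe_finset,
      coe_neighborFinset]
    exact hδ v
  have hedges := four_mul_sq_card_edgeFinset_add_le hG hdeg
  obtain ⟨s, hs⟩ : ∃ s, s = √(Fintype.card V : ℝ) := ⟨_, rfl⟩
  have hs_sq : (Fintype.card V : ℝ) = s ^ 2 := by rw [hs, Real.sq_sqrt hn]
  rw [← hs, hs_sq] at hedges
  rw [hthree_half, ← hs, hs_sq, ← coe_edgeFinset, Set.ncard_coe_finset]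
  exact le_of_four_mul_sq_add_le (hs ▸ Real.sqrt_nonneg _) (by linarith)

theorem exists_forall_mul_le_mul_rpow (C : ℝ) {ε : ℝ} (hε : 0 < ε) :
    ∃ N : ℕ, ∀ n : ℕ, N ≤ n → C * n ≤ ε * (n : ℝ) ^ (3 / 2 : ℝ) := by
  have hlim : Filter.Tendsto (fun n : ℕ ↦ (n : ℝ) ^ (1 / 2 : ℝ)) Filter.atTop Filter.atTop :=
    (tendsto_rpow_atTop one_half_pos).comp tendsto_natCast_atTop_atTop
  obtain ⟨N, hN⟩ := Filter.eventually_atTop.1 (hlim.eventually_ge_atTop (C / ε))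
  refine ⟨N, fun n hn ↦ ?_⟩
  calc C * n ≤ ε * (n : ℝ) ^ (1 / 2 : ℝ) * n := by
        have : C ≤ ε * (n : ℝ) ^ (1 / 2 : ℝ) := (div_le_iff₀' hε).1 (hN n hn)
        gcongr
    _ = ε * (n : ℝ) ^ (3 / 2 : ℝ) := by
        rw [mul_assoc, ← Real.rpow_add_one' (Nat.cast_nonneg n) (by norm_num)]
        norm_num

theorem B2_min_degree_upper (c ε : ℝ) (hc : 0 < c) (hε : 0 < ε) :
    ∃ N : ℕ, ∀ n : ℕ, N ≤ n → ∀ G : SimpleGraph (Fin n),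
      ¬ ContainsCopy (Bgraph 2) G →
      (∀ v : Fin n, c * (n : ℝ) ^ (1/2 : ℝ) ≤ ((G.neighborSet v).ncard : ℝ)) →
      (G.edgeSet.ncard : ℝ)
        ≤ ((-c + Real.sqrt (c ^ 2 + 32)) / 8 + ε) * (n : ℝ) ^ (3/2 : ℝ) := by
  obtain ⟨N, hN⟩ := exists_forall_mul_le_mul_rpow 4 hε
  refine ⟨N, fun n hn G hG hδ ↦ ?_⟩
  have hedges := B2_min_degree_upper_general hG (by simpa only [Fintype.card_fin] using hδ)
  rw [Fintype.card_fin] at hedges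
  linarith [hN n hn]
end
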